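/- Let K be an algebraically closed field of characteristic zero, let t ∈ K be transcendental over ℚ, and let α ∈ K satisfy α² + α + 2 = 0. Then the polynomial A₇ = x₁³ − x₂³ + (1+α)·x₁²x₂ + α·x₁x₂² + (5+2α)t·x₁ − (3−2α)t·x₂ + (2α+1)t is irreducible in K[x₁,x₂]. -/

import Mathlib

/-!
A factorization of a bivariate polynomial of total degree at most `3` into non-units contains a
factor of total degree `1`, so a reducible `A₇` would vanish on a line.

* On a horizontal line `A₇` restricts to a monic cubic in `x₁`, which is not identically zero.
* On a line `x₁ = u x₂ + c`, the coefficients of `x₂³` and `x₂²` in the restriction are `P(u)` and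
  `c P'(u)`, where `P = u³ + (1+α)u² + αu - 1` has discriminant `-7` and so is separable. Hence
  `c = 0`, and the constant coefficient is then `(2α+1)t`, which is nonzero since `(2α+1)² = -7`.

The coefficients of a one-variable cubic are read off from finite differences of its values at
`-1, 0, 1, 2`; the third difference is `6` times the leading coefficient. Transcendence of `t` enters only through `t ≠ 0`.
-/

/-- The value of `A₇` at the point `(x, y)`. -/
def A₇val {K : Type*} [Field K] (t α x y : K) : K :=
  x ^ 3 - y ^ 3 + (1 + α) * x ^ 2 * y + α * x * y ^ 2
    + (5 + 2 * α) * t * x - (3 - 2 * α) * t * y + (2 * α + 1) * t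

theorem two_mul_add_one_ne_zero {K : Type*} [Field K] [CharZero K] {α : K}
    (hα : α ^ 2 + α + 2 = 0) : 2 * α + 1 ≠ 0 := by
  intro h
  have : (7 : K) = 0 := by linear_combination 4 * hα - (2 * α + 1) * h
  norm_num at this

/-- `A₇` takes two different values on every horizontal line. -/
theorem A₇val_not_const {K : Type*} [Field K] [CharZero K] (t α k y : K) :
    ¬ ∀ x, A₇val t α x y = k := by
  intro h
  have : (6 : K) = 0 := by
    have h0 := h 0
    have h1 := h 1
    have h2 := h 2
    have h3 := h (-1)
    unfold A₇val at h0 h1 h2 h3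
    linear_combination h2 - 3 * h1 + 3 * h0 - h3
  norm_num at this

/-- The separability of `P = u³ + (1+α)u² + αu - 1`: it has no common root with its derivative. -/
theorem cubic_separable {K : Type*} [Field K] [CharZero K] {α u : K}
    (hα : α ^ 2 + α + 2 = 0) (hP : u ^ 3 + (1 + α) * u ^ 2 + α * u - 1 = 0) :
    3 * u ^ 2 + 2 * (1 + α) * u + α ≠ 0 := by
  intro hD
  -- With `s = 2α+1`, the remainder of `9P` modulo `P'` is `s(2u+s)`, and `4P'(-s/2) = -9`.
  have hR : (2 * α + 1) * (2 * u + (2 * α + 1)) = 0 := by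
    linear_combination 9 * hP - (3 * u + (1 + α)) * hD + (5 + 2 * u) * hα
  have hu := (mul_eq_zero.mp hR).resolve_left (two_mul_add_one_ne_zero hα)
  have : (9 : K) = 0 := by
    linear_combination -4 * hD + (6 * u - 3 * (2 * α + 1) + 4 * (1 + α)) * hu + 4 * hα
  norm_num at this

theorem A₇val_line {K : Type*} [Field K] [CharZero K] {t α : K} (ht : t ≠ 0)
    (hα : α ^ 2 + α + 2 = 0) (u c : K) : ¬ ∀ y, A₇val t α (u * y + c) y = 0 := by
  intro h
  have h0 := h 0
  have h1 := h 1
  have h2 := h 2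
  have h3 := h (-1)
  unfold A₇val at h0 h1 h2 h3
  have hP : u ^ 3 + (1 + α) * u ^ 2 + α * u - 1 = 0 := by
    linear_combination (h2 - 3 * h1 + 3 * h0 - h3) / 6
  have hD : c * (3 * u ^ 2 + 2 * (1 + α) * u + α) = 0 := by
    linear_combination (h1 + h3 - 2 * h0) / 2
  have hc := (mul_eq_zero.mp hD).resolve_right (cubic_separable hα hP)
  subst hc
  refine mul_ne_zero (two_mul_add_one_ne_zero hα) ht ?_
  linear_combination h0

open MvPolynomial in
theorem eq_linear_of_totalDegree_le_one {K : Type*} [Field K] {f : MvPolynomial (Fin 2) K}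
    (hf : f.totalDegree ≤ 1) : ∃ a b c : K, f = C a * X 0 + C b * X 1 + C c := by
  refine ⟨coeff (Finsupp.single 0 1) f, coeff (Finsupp.single 1 1) f, coeff 0 f, ?_⟩
  ext m
  have hm : m = 0 ∨ m = Finsupp.single 0 1 ∨ m = Finsupp.single 1 1 ∨ 1 < m 0 + m 1 := by
    simp only [Finsupp.ext_iff, Fin.forall_fin_two, Finsupp.single_apply, Finsupp.coe_zero,
      Pi.zero_apply]
    simp
    lia
  rcases hm with rfl | rfl | rfl | hm
  · simp
  · simp [coeff_C_mul, coeff_X, coeff_C, Finsupp.single_left_inj]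
    exact fun h => by simpa using DFunLike.congr_fun h 0
  · simp [coeff_C_mul, coeff_X, coeff_C, Finsupp.single_left_inj]
    exact fun h => by simpa using DFunLike.congr_fun h 1
  · have key : ∀ g : MvPolynomial (Fin 2) K, g.totalDegree ≤ 1 → coeff m g = 0 := by
      intro g hg
      apply coeff_eq_zero_of_totalDegree_lt
      have : ∑ i ∈ m.support, m i = m 0 + m 1 := by
        rw [← Fin.sum_univ_two]
        exact Finset.sum_subset (Finset.subset_univ _) (by simp)
      lia
    rw [key f hf, key]
    refine (totalDegree_add _ _).trans (max_le ((totalDegree_add _ _).trans (max_le ?_ ?_)) ?_)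
    · exact (totalDegree_mul _ _).trans (by simp)
    · exact (totalDegree_mul _ _).trans (by simp)
    · simp

open MvPolynomial in
/-- A polynomial taking the values of `A₇` has no divisor of total degree `1`. -/
theorem no_linear_factor {K : Type*} [Field K] [CharZero K] {t α : K} (ht : t ≠ 0)
    (hα : α ^ 2 + α + 2 = 0) {p f : MvPolynomial (Fin 2) K}
    (hp : ∀ x y, eval ![x, y] p = A₇val t α x y) (hfp : f ∣ p)
    (hf : f.totalDegree = 1) : False := by
  obtain ⟨a, b, c, rfl⟩ := eq_linear_of_totalDegree_le_one hf.le
  have hz : ∀ x y, a * x + b * y + c = 0 → A₇val t α x y = 0 := by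
    intro x y h
    obtain ⟨g, rfl⟩ := hfp
    rw [← hp]
    simp [h]
  by_cases ha : a = 0
  · by_cases hb : b = 0
    · simp [ha, hb] at hf
    · refine A₇val_not_const t α 0 (-c / b) fun x => hz _ _ ?_
      rw [ha]
      field_simp
      ring
  · refine A₇val_line ht hα (-b / a) (-c / a) fun y => hz _ _ ?_
    field_simp
    ring

open MvPolynomial in
/-- Let `K` be an algebraically closed field of characteristic
zero, let `t ∈ K` be transcendental over `ℚ`, and let `α ∈ K` satisfy
`α² + α + 2 = 0`.  Then
`A₇ = x₁³ − x₂³ + (1+α)x₁²x₂ + α·x₁x₂² + (5+2α)t·x₁ − (3−2α)t·x₂ + (2α+1)t`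
is irreducible in `K[x₁,x₂]`. -/
theorem A₇_irreducible
    {K : Type*} [Field K] [CharZero K] [IsAlgClosed K] (t α : K)
    (htr : Transcendental ℚ t) (hα : α^2 + α + 2 = 0) :
    Irreducible
      (X 0 ^ 3 - X 1 ^ 3 + C (1 + α) * X 0 ^ 2 * X 1 + C α * X 0 * X 1 ^ 2
        + C ((5 + 2*α) * t) * X 0 - C ((3 - 2*α) * t) * X 1 + C ((2*α + 1) * t)
        : MvPolynomial (Fin 2) K) := by
  have ht : t ≠ 0 := by
    rintro rfl
    exact htr isAlgebraic_zero
  have hdeg : (X 0 ^ 3 - X 1 ^ 3 + C (1 + α) * X 0 ^ 2 * X 1 + C α * X 0 * X 1 ^ 2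
        + C ((5 + 2*α) * t) * X 0 - C ((3 - 2*α) * t) * X 1 + C ((2*α + 1) * t)
        : MvPolynomial (Fin 2) K).totalDegree ≤ 3 := by
    have hC : ∀ k : K, (C k : MvPolynomial (Fin 2) K).totalDegree ≤ 0 := fun k => by simp
    have hX : ∀ i, (X i : MvPolynomial (Fin 2) K).totalDegree ≤ 1 := fun i => by simp
    have hpow : ∀ i n, (X i ^ n : MvPolynomial (Fin 2) K).totalDegree ≤ n := fun i n => by simp
    have hmul : ∀ {f g : MvPolynomial (Fin 2) K} {m n : ℕ}, f.totalDegree ≤ m →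
        g.totalDegree ≤ n → (f * g).totalDegree ≤ m + n := fun hf hg =>
      (totalDegree_mul _ _).trans (add_le_add hf hg)
    have hadd : ∀ {f g : MvPolynomial (Fin 2) K}, f.totalDegree ≤ 3 → g.totalDegree ≤ 3 →
        (f + g).totalDegree ≤ 3 := fun hf hg => (totalDegree_add _ _).trans (max_le hf hg)
    have hsub : ∀ {f g : MvPolynomial (Fin 2) K}, f.totalDegree ≤ 3 → g.totalDegree ≤ 3 →
        (f - g).totalDegree ≤ 3 := fun hf hg => (totalDegree_sub _ _).trans (max_le hf hg)
    refine hadd (hsub (hadd (hadd (hadd (hsub (hpow _ _) (hpow _ _)) ?_) ?_) ?_) ?_) ?_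
    · exact (hmul (hmul (hC _) (hpow _ _)) (hX _)).trans (by norm_num)
    · exact (hmul (hmul (hC _) (hX _)) (hpow _ _)).trans (by norm_num)
    · exact (hmul (hC _) (hX _)).trans (by norm_num)
    · exact (hmul (hC _) (hX _)).trans (by norm_num)
    · exact (hC _).trans (by norm_num)
  have heval : ∀ x y, eval ![x, y] (X 0 ^ 3 - X 1 ^ 3 + C (1 + α) * X 0 ^ 2 * X 1
        + C α * X 0 * X 1 ^ 2
        + C ((5 + 2*α) * t) * X 0 - C ((3 - 2*α) * t) * X 1 + C ((2*α + 1) * t)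
        : MvPolynomial (Fin 2) K) = A₇val t α x y := by
    intro x y
    simp [A₇val]
  generalize (X 0 ^ 3 - X 1 ^ 3 + C (1 + α) * X 0 ^ 2 * X 1 + C α * X 0 * X 1 ^ 2
        + C ((5 + 2*α) * t) * X 0 - C ((3 - 2*α) * t) * X 1 + C ((2*α + 1) * t)
        : MvPolynomial (Fin 2) K) = p at hdeg heval ⊢
  have hconst : ∀ k, p ≠ C k := by
    rintro k rfl
    exact A₇val_not_const t α k 0 fun x => by rw [← heval, eval_C]
  have hp0 : p ≠ 0 := by simpa using hconst 0
  refine ⟨fun hu => ?_, fun f g hfg => ?_⟩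
  · obtain ⟨k, -, hk⟩ := isUnit_iff_eq_C_of_isReduced.mp hu
    exact hconst k hk
  · have hf0 : f ≠ 0 := by
      rintro rfl
      simp [hp0] at hfg
    have hg0 : g ≠ 0 := by
      rintro rfl
      simp [hp0] at hfg
    have hunit : ∀ q : MvPolynomial (Fin 2) K, q ≠ 0 → q.totalDegree = 0 → IsUnit q := by
      intro q hq hd
      rw [totalDegree_eq_zero_iff_eq_C] at hd
      rw [hd] at hq ⊢
      exact (isUnit_iff_ne_zero.mpr fun h => hq (by rw [h, C_0])).map C
    have hf1 : f.totalDegree ≠ 1 := no_linear_factor ht hα heval ⟨g, hfg⟩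
    have hg1 : g.totalDegree ≠ 1 := no_linear_factor ht hα heval ⟨f, hfg.trans (mul_comm f g)⟩
    rw [hfg, totalDegree_mul_of_isDomain hf0 hg0] at hdeg
    rcases Nat.eq_zero_or_pos f.totalDegree with h | h
    · exact .inl (hunit f hf0 h)
    · exact .inr (hunit g hg0 (by lia))
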